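/- arXiv:2502.15647 — 5 statements merged into one kernel-verified Lean document; each statement's English description precedes it below -/
import Mathlib

section
/- Let q be a prime power and let G = {β_0, β_1, …, β_{q−1}} be a subgroup of the symmetric group S_q on a set X of q elements such that |G| = q and every element of G other than the identity has no fixed point in X. Let h be a permutation of X such that for every i ∈ {0,…,q−1} there is exactly one x ∈ X with h(x) = β_i(x). Then: (1) for all 0 ≤ i ≠ j ≤ q−1, the permutation (h β_i)(h β_j)^{−1} has no fixed point in X; and (2) for all i, j ∈ {0,…,q−1} there is exactly one x ∈ X with β_i(x) = h(β_j(x)). -/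
/-- Lemma 2.6 (Lemma 4.4 of Hasan–Kumar): if `G = {β_0,…,β_{q−1}}` is a subgroup of `S_q`
of order `q` all of whose non-identity elements are fixed-point-free, and `h` intersects
each `β_i` simply, then `(hβ_0,…,hβ_{q−1})` is a permutation polynomial tuple and the
associated polynomial is a companion of the one associated with `(β_0,…,β_{q−1})`. -/
theorem statement5 {X : Type*} [Fintype X] (q : ℕ) (hq : IsPrimePow q)
    (hX : Fintype.card X = q)
    (G : Subgroup (Equiv.Perm X)) (β : Fin q → Equiv.Perm X)
    (hrange : Set.range β = (G : Set (Equiv.Perm X)))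
    (hcard : Nat.card G = q)
    (hfree : ∀ g ∈ G, g ≠ 1 → ∀ x : X, g x ≠ x)
    (h : Equiv.Perm X)
    (hint : ∀ i : Fin q, ∃! x : X, h x = β i x) :
    (∀ i j : Fin q, i ≠ j → ∀ x : X, ((h * β i) * (h * β j)⁻¹) x ≠ x) ∧
    (∀ i j : Fin q, ∃! x : X, β i x = h (β j x)) := by
  have hmem : ∀ i, β i ∈ G := fun i => by
    have : β i ∈ (G : Set (Equiv.Perm X)) := hrange ▸ Set.mem_range_self i
    exact this
  have hsurj : Function.Surjective (fun i => (⟨β i, hmem i⟩ : G)) := by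
    rintro ⟨g, hg⟩
    have : g ∈ Set.range β := by rw [hrange]; exact hg
    obtain ⟨i, hi⟩ := this
    exact ⟨i, Subtype.ext hi⟩
  have hinj : Function.Injective (fun i => (⟨β i, hmem i⟩ : G)) :=
    (hsurj.bijective_of_nat_card_le (by simp [hcard])).1
  refine ⟨fun i j hij x hx => ?_, fun i j => ?_⟩
  · refine hfree (β i * (β j)⁻¹) (G.mul_mem (hmem i) (G.inv_mem (hmem j))) ?_ (h⁻¹ x) ?_
    · intro e
      exact hij (hinj (Subtype.ext (mul_inv_eq_one.mp e)))
    · apply h.injective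
      simpa [mul_inv_rev, Equiv.Perm.mul_apply] using hx
  · obtain ⟨k, hk⟩ := hsurj ⟨β i * (β j)⁻¹, G.mul_mem (hmem i) (G.inv_mem (hmem j))⟩
    have hk' : β k = β i * (β j)⁻¹ := congrArg Subtype.val hk
    obtain ⟨y, hy, huniq⟩ := hint k
    refine ⟨(β j)⁻¹ y, ?_, fun z hz => ?_⟩
    · simp only [hk', Equiv.Perm.mul_apply] at hy
      simp [hy]
    · have : β j z = y := huniq _ (by simp [hk', hz])
      simp [← this]
end

section
/- Let p be a prime, n ≥ 2 an integer, δ ∈ {1,2} with δ ≤ n, and q = p^n. Then the number of q-tuples (β_0, β_1, …, β_{q−1}) of permutations of {0,…,p^n−1} such that β_i β_j^{−1} has no fixed point for all i ≠ j and the set {β_0, …, β_{q−1}} is a subgroup of S_q isomorphic to Z_{p^δ} × Z_p × ⋯ × Z_p (with n−δ factors Z_p) equals p^n! · (p^n − 1)! / ( (p^n − p^{(δ−1)(n−δ+1)}) · Π_{i=1}^{n−δ} (p^{n−δ+1} − p^i) ). -/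
theorem card_free_homs (q : ℕ) (A : Type) [AddGroup A] [Finite A] (hA : Nat.card A = q)
    (hq : 0 < q) :
    Nat.card {ψ : Multiplicative A →* Equiv.Perm (Fin q) // ∀ g, ∀ x, ψ g x = x → g = 1} * q
      = q.factorial := by
  classical
  have : Fintype A := Fintype.ofFinite A
  have hcard : Fintype.card A = q := by rw [← Nat.card_eq_fintype_card, hA]
  have e0 : A ≃ Fin q := Fintype.equivFinOfCardEq hcard
  have e : {ψ : Multiplicative A →* Equiv.Perm (Fin q) // ∀ g, ∀ x, ψ g x = x → g = 1} × Fin q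
      ≃ (A ≃ Fin q) := by
    refine Equiv.ofBijective (fun P => Equiv.ofBijective
      (fun a => P.1.1 (Multiplicative.ofAdd a) P.2) ?_) ⟨?_, ?_⟩
    · rw [Fintype.bijective_iff_injective_and_card]
      refine ⟨?_, by simp [hcard]⟩
      intro a b hab
      have := P.1.2 (Multiplicative.ofAdd (-b + a)) P.2 (by
        simp only at hab
        rw [ofAdd_add, map_mul, Equiv.Perm.mul_apply, hab, ← Equiv.Perm.mul_apply, ← map_mul,
          ← ofAdd_add]
        simp)
      have h2 : -b + a = 0 := this
      exact (neg_add_eq_zero.mp h2).symm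
    · rintro ⟨⟨ψ, hψ⟩, x⟩ ⟨⟨φ, hφ⟩, y⟩ h
      have h1 : ∀ a, ψ (Multiplicative.ofAdd a) x = φ (Multiplicative.ofAdd a) y :=
        fun a => DFunLike.congr_fun h a
      have hxy : x = y := by simpa using h1 0
      subst hxy
      have hs : Function.Injective (fun a : A => ψ (Multiplicative.ofAdd a) x) := by
        intro a b hab
        have := hψ (Multiplicative.ofAdd (-b + a)) x (by
          simp only at hab
          rw [ofAdd_add, map_mul, Equiv.Perm.mul_apply, hab, ← Equiv.Perm.mul_apply, ← map_mul,
            ← ofAdd_add]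
          simp)
        have h2 : -b + a = 0 := this
        exact (neg_add_eq_zero.mp h2).symm
      have hs' := ((Fintype.bijective_iff_injective_and_card _).2 ⟨hs, by simp [hcard]⟩).2
      have : ψ = φ := by
        refine MonoidHom.ext fun g => Equiv.ext fun z => ?_
        obtain ⟨a, rfl⟩ := hs' z
        have e1 : ψ g (ψ (Multiplicative.ofAdd a) x) = φ g (φ (Multiplicative.ofAdd a) x) := by
          rw [← Equiv.Perm.mul_apply, ← map_mul, ← Equiv.Perm.mul_apply, ← map_mul]
          exact h1 (Multiplicative.toAdd (g * Multiplicative.ofAdd a))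
        simp only
        rw [e1, h1]
      subst this
      rfl
    · intro τ
      refine ⟨⟨⟨⟨⟨fun g => (τ.symm.trans (Equiv.addLeft (Multiplicative.toAdd g))).trans τ, ?_⟩,
        ?_⟩, ?_⟩, τ 0⟩, ?_⟩
      · ext; simp
      · intro g h; ext; simp
      · intro g x hx
        have : τ (Multiplicative.toAdd g + τ.symm x) = x := hx
        have h3 : Multiplicative.toAdd g + τ.symm x = τ.symm x := by
          rw [← Equiv.apply_eq_iff_eq τ, this]; simp
        have : Multiplicative.toAdd g = 0 := by simpa using h3
        exact this
      · ext a; simp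
  have := Nat.card_congr e
  rw [Nat.card_prod] at this
  simp only [Nat.card_eq_fintype_card (α := Fin q), Fintype.card_fin] at this
  rw [this, Nat.card_eq_fintype_card, Fintype.card_equiv e0, hcard]

theorem count_tuples (q : ℕ) (A : Type) [AddGroup A] [Finite A] (hA : Nat.card A = q)
    (hq : 0 < q) :
    Nat.card {β : Fin q → Equiv.Perm (Fin q) //
      (∀ i j : Fin q, i ≠ j → ∀ x : Fin q, (β i * (β j)⁻¹) x ≠ x) ∧
      ∃ H : Subgroup (Equiv.Perm (Fin q)),
        (H : Set (Equiv.Perm (Fin q))) = Set.range β ∧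
        Nonempty (Additive H ≃+ A)} * Nat.card (A ≃+ A) = q.factorial * (q-1).factorial := by
  classical
  have : Fintype A := Fintype.ofFinite A
  have hcard : Fintype.card A = q := by rw [← Nat.card_eq_fintype_card, hA]
  have e0 : A ≃ Fin q := Fintype.equivFinOfCardEq hcard
  have h1 := card_free_homs q A hA hq
  have h2 : Nat.card {ψ : Multiplicative A →* Equiv.Perm (Fin q) // ∀ g, ∀ x, ψ g x = x → g = 1}
      = (q-1).factorial := by
    apply Nat.eq_of_mul_eq_mul_right hq
    rw [h1, mul_comm, Nat.mul_factorial_pred hq.ne']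
  have h3 : Nat.card (Fin q ≃ A) = q.factorial := by
    rw [Nat.card_eq_fintype_card, Fintype.card_equiv e0.symm, Fintype.card_fin]
  rw [← h2, ← h3, ← Nat.card_prod, ← Nat.card_prod]
  symm
  -- the map sends (σ, ψ) to (ψ ∘ σ, e_β ∘ ψ)
  set X := {β : Fin q → Equiv.Perm (Fin q) //
      (∀ i j : Fin q, i ≠ j → ∀ x : Fin q, (β i * (β j)⁻¹) x ≠ x) ∧
      ∃ H : Subgroup (Equiv.Perm (Fin q)),
        (H : Set (Equiv.Perm (Fin q))) = Set.range β ∧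
        Nonempty (Additive H ≃+ A)} with hX
  have ch : ∀ β : X, ∃ H : Subgroup (Equiv.Perm (Fin q)),
        (H : Set (Equiv.Perm (Fin q))) = Set.range β.1 ∧
        Nonempty (Additive H ≃+ A) := fun β => β.2.2
  choose H hH hE using ch
  have E : ∀ β : X, Additive (H β) ≃+ A := fun β => (hE β).some
  -- inverse direction : (β, α) ↦ (σ, ψ)
  symm
  have binj : ∀ β : X, Function.Injective β.1 := by
    intro β i j hij
    by_contra hne
    exact β.2.1 i j hne i (by rw [hij]; simp)
  have bmem : ∀ (β : X) i, β.1 i ∈ H β := by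
    intro β i
    have : β.1 i ∈ (H β : Set _) := by rw [hH]; exact ⟨i, rfl⟩
    exact this
  let Ψ : X → (A ≃+ A) → (Multiplicative A →* Equiv.Perm (Fin q)) := fun β α =>
    (H β).subtype.comp (AddMonoidHom.toMultiplicativeLeft ((α.trans (E β).symm).toAddMonoidHom))
  have hΨ : ∀ β α a, Ψ β α (Multiplicative.ofAdd a)
    = ((Additive.toMul ((E β).symm (α a)) : H β) : Equiv.Perm (Fin q)) := fun _ _ _ => rfl
  let s : X → (A ≃+ A) → Fin q → A := fun β α i =>
    α.symm (E β (Additive.ofMul ⟨β.1 i, bmem β i⟩))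
  have hs : ∀ β α, Function.Bijective (s β α) := by
    intro β α
    rw [Fintype.bijective_iff_injective_and_card]
    refine ⟨?_, by simp [hcard]⟩
    intro i j hij
    have := (E β).injective (α.symm.injective hij)
    have := congrArg Subtype.val (Additive.ofMul.injective this)
    exact binj β this
  have hΨs : ∀ β α i, Ψ β α (Multiplicative.ofAdd (s β α i)) = β.1 i := by
    intro β α i
    rw [hΨ]
    simp [s]
  have hfree : ∀ β α g x, Ψ β α g x = x → g = 1 := by
    intro β α g x hx
    obtain ⟨i, hi⟩ := (hs β α).2 (Multiplicative.toAdd g)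
    obtain ⟨j, hj⟩ := (hs β α).2 0
    have hgi : Ψ β α g = β.1 i := by
      rw [← hΨs β α i, hi]; rfl
    have hgj : (1 : Equiv.Perm (Fin q)) = β.1 j := by
      rw [← hΨs β α j, hj]; simp
    by_cases hij : i = j
    · subst hij
      rw [hi] at hj
      exact hj
    · exact absurd (by rw [← hgi, ← hgj]; simpa using hx) (β.2.1 i j hij x)
  refine Nat.card_congr (Equiv.ofBijective (fun P : X × (A ≃+ A) =>
    (Equiv.ofBijective (s P.1 P.2) (hs P.1 P.2), ⟨Ψ P.1 P.2, hfree P.1 P.2⟩)) ⟨?_, ?_⟩)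
  · rintro ⟨β, α⟩ ⟨γ, κ⟩ h
    rw [Prod.mk.injEq] at h
    obtain ⟨ha, hb⟩ := h
    have ha' : s β α = s γ κ := by
      funext i; exact DFunLike.congr_fun ha i
    have hb' : Ψ β α = Ψ γ κ := congrArg Subtype.val hb
    have : β = γ := by
      apply Subtype.ext
      funext i
      rw [← hΨs β α i, ← hΨs γ κ i, ha', hb']
    subst this
    congr 1
    ext a
    have := DFunLike.congr_fun hb' (Multiplicative.ofAdd a)
    rw [hΨ, hΨ] at this
    exact (E β).symm.injective (Additive.toMul.injective (Subtype.ext this))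
  · rintro ⟨σ, ψ, hψ⟩
    have hinj : Function.Injective ψ := by
      rw [injective_iff_map_eq_one]
      intro g hg
      exact hψ g ⟨0, hq⟩ (by rw [hg]; rfl)
    let eψ := MonoidHom.ofInjective hinj
    let β : X := ⟨fun i => ψ (Multiplicative.ofAdd (σ i)), by
      refine ⟨?_, ψ.range, ?_, ⟨?_⟩⟩
      · intro i j hij x hx
        rw [← map_inv, ← map_mul] at hx
        have := hψ _ _ hx
        rw [mul_inv_eq_one] at this
        exact hij (σ.injective (Multiplicative.ofAdd.injective this))
      · ext y
        constructor
        · rintro ⟨g, rfl⟩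
          exact ⟨σ.symm (Multiplicative.toAdd g), by simp⟩
        · rintro ⟨i, rfl⟩
          exact ⟨_, rfl⟩
      · exact (MulEquiv.toAdditiveLeft eψ.symm)⟩
    have hr : ψ.range = H β := by
      apply SetLike.coe_injective
      rw [hH β]
      ext y
      constructor
      · rintro ⟨g, rfl⟩
        exact ⟨σ.symm (Multiplicative.toAdd g), by simp [β]⟩
      · rintro ⟨i, rfl⟩
        exact ⟨_, rfl⟩
    let α : A ≃+ A := (MulEquiv.toAdditiveRight (eψ.trans (MulEquiv.subgroupCongr hr))).trans (E β)
    have hα : Ψ β α = ψ := by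
      refine MonoidHom.ext fun g => ?_
      rw [← ofAdd_toAdd g, hΨ]
      simp [α]
      rfl
    refine ⟨(β, α), ?_⟩
    rw [Prod.mk.injEq]
    refine ⟨?_, Subtype.ext hα⟩
    ext i
    apply Multiplicative.ofAdd.injective
    apply hinj
    simp only
    have := hΨs β α i
    rw [hα] at this
    exact this

theorem card_cons_LI {K V : Type} [Field K] [Fintype K] [AddCommGroup V] [Module K V] [Finite V]
    (v : V) (hv : v ≠ 0) (k : ℕ) :
    Nat.card {y : Fin k → V // LinearIndependent K (Fin.cons v y : Fin (k+1) → V)} =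
      ∏ i ∈ Finset.Icc 1 k, (Nat.card V - Nat.card K ^ i) := by
  classical
  induction k with
  | zero =>
    simp only [Finset.Icc_eq_empty_of_lt, zero_lt_one, Finset.prod_empty]
    rw [Nat.card_eq_one_iff_unique]
    refine ⟨inferInstance, ⟨⟨Fin.elim0, ?_⟩⟩⟩
    exact (linearIndependent_unique_iff (ι := Fin 1)).2 hv
  | succ k ih =>
    rw [Finset.prod_Icc_succ_top (by omega), ← ih]
    have e : {y : Fin (k+1) → V // LinearIndependent K (Fin.cons v y : Fin (k+1+1) → V)} ≃
      Σ y : {y : Fin k → V // LinearIndependent K (Fin.cons v y : Fin (k+1) → V)},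
        {z : V // z ∉ Submodule.span K (Set.range (Fin.cons v y.1 : Fin (k+1) → V))} := 
      { toFun := fun y => ⟨⟨Fin.init y.1, by
            have := y.2
            rw [← Fin.snoc_init_self y.1, Fin.cons_snoc_eq_snoc_cons,
              linearIndependent_finSnoc] at this
            exact this.1⟩, ⟨y.1 (Fin.last k), by
            have := y.2
            rw [← Fin.snoc_init_self y.1, Fin.cons_snoc_eq_snoc_cons,
              linearIndependent_finSnoc] at this
            exact this.2⟩⟩
        invFun := fun P => ⟨Fin.snoc P.1.1 P.2.1, by
            rw [Fin.cons_snoc_eq_snoc_cons, linearIndependent_finSnoc]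
            exact ⟨P.1.2, P.2.2⟩⟩
        left_inv := fun y => by simp
        right_inv := fun P => by
          rcases P with ⟨⟨y, hy⟩, ⟨z, hz⟩⟩
          exact Sigma.subtype_ext (Subtype.ext (by simp)) (by simp) }
    have : Fintype {y : Fin k → V // LinearIndependent K (Fin.cons v y : Fin (k+1) → V)} :=
      Fintype.ofFinite _
    rw [Nat.card_congr e, Nat.card_sigma]
    rw [Finset.sum_congr rfl (g := fun _ => Nat.card V - Nat.card K ^ (k+1))]
    · simp
    · intro y _
      have h1 : Nat.card (Submodule.span K (Set.range (Fin.cons v y.1 : Fin (k+1) → V))) =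
        Nat.card K ^ (k+1) := by
        rw [Module.natCard_eq_pow_finrank (K := K), finrank_span_eq_card y.2, Fintype.card_fin]
      rw [← h1]
      have := Fintype.ofFinite V
      simp only [Nat.card_eq_fintype_card]
      exact Fintype.card_subtype_compl _

theorem zmod_card_smul (N d : ℕ) [NeZero N] :
    Nat.card {a : ZMod N // d • a = 0} = N.gcd d := by
  have := IsAddCyclic.card_nsmulAddMonoidHom_ker (ZMod N) d
  rw [Nat.card_zmod] at this
  exact this

abbrev GG (p d m : ℕ) := ZMod (p ^ (d+1)) × (Fin m → ZMod p)

theorem GG_card_smul (p d m e : ℕ) (hp : p.Prime) :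
    Nat.card {g : GG p d m // e • g = 0} = (p ^ (d+1)).gcd e * (p.gcd e) ^ m := by
  have : NeZero p := ⟨hp.ne_zero⟩
  have e1 : {g : GG p d m // e • g = 0} ≃
      {a : ZMod (p ^ (d+1)) // e • a = 0} × (Fin m → {a : ZMod p // e • a = 0}) :=
    { toFun := fun g => (⟨g.1.1, congrArg Prod.fst g.2⟩,
        fun i => ⟨g.1.2 i, congrFun (congrArg Prod.snd g.2) i⟩)
      invFun := fun P => ⟨(P.1.1, fun i => (P.2 i).1),
        Prod.ext P.1.2 (funext fun i => (P.2 i).2)⟩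
      left_inv := fun _ => rfl
      right_inv := fun _ => rfl }
  rw [Nat.card_congr e1, Nat.card_prod, zmod_card_smul, Nat.card_fun, zmod_card_smul]
  simp

theorem GG_smul_zero (p d m : ℕ) (g : GG p d m) : p ^ (d+1) • g = 0 := by
  refine Prod.ext ?_ (funext fun i => ?_)
  · change p ^ (d+1) • g.1 = 0
    rw [nsmul_eq_mul, ZMod.natCast_self, zero_mul]
  · simp [nsmul_eq_mul, pow_succ]

theorem zmod_tors (p d : ℕ) (hp : p.Prime) (a : ZMod (p ^ (d+1))) (ha : p • a = 0) :
    ∃ k : ℕ, a = ((k * p ^ d : ℕ) : ZMod (p ^ (d+1))) := by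
  have : NeZero p := ⟨hp.ne_zero⟩
  have h : ((p * a.val : ℕ) : ZMod (p ^ (d+1))) = 0 := by
    push_cast; rw [ZMod.natCast_zmod_val, ← nsmul_eq_mul, ha]
  rw [ZMod.natCast_eq_zero_iff] at h
  replace h : p * p ^ d ∣ p * a.val := by rwa [← pow_succ']
  obtain ⟨k, hk⟩ := Nat.dvd_of_mul_dvd_mul_left hp.pos h
  exact ⟨k, by rw [mul_comm, ← hk, ZMod.natCast_zmod_val]⟩

theorem card_aut (p d m : ℕ) (hp : p.Prime) (hd : d ≤ 1) :
    Nat.card (GG p d m ≃+ GG p d m) = (p ^ (m+d+1) - p ^ (d*(m+1))) *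
      ∏ i ∈ Finset.Icc 1 m, (p ^ (m+1) - p ^ i) := by
  classical
  have : NeZero p := ⟨hp.ne_zero⟩
  have : Fact p.Prime := ⟨hp⟩
  let V : AddSubgroup (GG p d m) := (nsmulAddMonoidHom p : GG p d m →+ GG p d m).ker
  have hV : ∀ x : GG p d m, x ∈ V ↔ p • x = 0 := fun x => Iff.rfl
  have hV0 : ∀ x : V, p • x = 0 := fun x => Subtype.ext x.2
  let _ : Module (ZMod p) V := AddCommGroup.zmodModule hV0
  have hVc : Nat.card V = p ^ (m+1) := by
    have := GG_card_smul p d m p hp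
    rw [Nat.gcd_self, Nat.gcd_eq_right (dvd_pow_self p (Nat.succ_ne_zero d)), ← pow_succ'] at this
    exact this
  let u : GG p d m → V := fun x => ⟨p ^ d • x, by
    rw [hV, smul_smul, ← pow_succ', GG_smul_zero]⟩
  let L : GG p d m → (ZMod (p ^ (d+1)) →+ GG p d m) := fun x =>
    ZMod.lift (p ^ (d+1)) ⟨zmultiplesHom _ x, by
      rw [zmultiplesHom_apply, natCast_zsmul, GG_smul_zero]⟩
  have hL : ∀ x (k : ℕ), L x (k : ZMod (p ^ (d+1))) = k • x := by
    intro x k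
    have := ZMod.lift_coe (p ^ (d+1)) ⟨zmultiplesHom _ x, by
      rw [zmultiplesHom_apply, natCast_zsmul, GG_smul_zero]⟩ (k : ℤ)
    simpa using this
  let Φ : GG p d m × (Fin m → V) → (GG p d m →+ GG p d m) := fun P =>
    (L P.1).coprod (V.subtype.comp (Fintype.linearCombination (ZMod p) P.2).toAddMonoidHom)
  have hΦ : ∀ x y (k : ℕ) b, Φ (x, y) ((k : ZMod (p ^ (d+1))), b) =
      k • x + ((∑ i, b i • y i : V) : GG p d m) := by
    intro x y k b
    rw [← hL]; rfl
  have hΦ1 : ∀ x y, Φ (x, y) (1, 0) = x := by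
    intro x y
    have := hΦ x y 1 0
    simpa using this
  have hΦ2 : ∀ x y i, Φ (x, y) (0, Pi.single i 1) = y i := by
    intro x y i
    have := hΦ x y 0 (Pi.single i 1)
    rw [Nat.cast_zero] at this
    rw [this, zero_smul, zero_add, Finset.sum_eq_single i]
    · simp
    · intro j _ hj; simp [hj]
    · simp
  have hext : ∀ f g : GG p d m →+ GG p d m, f (1, 0) = g (1, 0) →
      (∀ i, f (0, Pi.single i 1) = g (0, Pi.single i 1)) → f = g := by
    intro f g h1 h2
    have hinl : f.comp (AddMonoidHom.inl _ _) = g.comp (AddMonoidHom.inl _ _) := by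
      refine AddMonoidHom.ext fun a => ?_
      have : a = a.val • (1 : ZMod (p ^ (d+1))) := by simp
      rw [this, map_nsmul, map_nsmul]
      congr 1
    have hinr : f.comp (AddMonoidHom.inr _ _) = g.comp (AddMonoidHom.inr _ _) := by
      refine AddMonoidHom.functions_ext (M := fun _ : Fin m => ZMod p) (GG p d m) _ _ fun i a => ?_
      have : (Pi.single i a : Fin m → ZMod p) = a.val • Pi.single i 1 := by
        rw [← Pi.single_smul]; simp
      rw [this, map_nsmul, map_nsmul]
      congr 1
      exact h2 i
    rw [← AddMonoidHom.coprod_unique f, ← AddMonoidHom.coprod_unique g, hinl, hinr]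
  have hbij : Function.Bijective Φ := by
    constructor
    · rintro ⟨x, y⟩ ⟨x', y'⟩ h
      have h1 := hΦ1 x y
      rw [h, hΦ1] at h1
      subst h1
      congr 1
      funext i
      have h2 := hΦ2 x' y i
      rw [h, hΦ2] at h2
      exact (Subtype.ext h2).symm
    · intro f
      refine ⟨(f (1, 0), fun i => ⟨f (0, Pi.single i 1), ?_⟩), ?_⟩
      · rw [hV, ← map_nsmul]
        have : p • ((0, Pi.single i 1) : GG p d m) = 0 := by
          refine Prod.ext (by simp) ?_
          change p • (Pi.single i 1 : Fin m → ZMod p) = 0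
          rw [← Pi.single_smul]; simp
        rw [this, map_zero]
      · apply hext
        · rw [hΦ1]
        · intro i; rw [hΦ2]
  have hcoe : ∀ (k : ℕ) (v : V), ((k : ZMod p) • v) = k • v := by
    intro k v; exact Nat.cast_smul_eq_nsmul (ZMod p) k v
  have hinj : ∀ x y, Function.Injective (Φ (x, y)) ↔
      LinearIndependent (ZMod p) (Fin.cons (u x) y : Fin (m+1) → V) := by
    intro x y
    rw [Fintype.linearIndependent_iff, injective_iff_map_eq_zero]
    have key : ∀ (k : ℕ) (b : Fin m → ZMod p),
        Φ (x, y) (((k * p ^ d : ℕ) : ZMod (p ^ (d+1))), b) =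
        (((k : ZMod p) • u x + ∑ i, b i • y i : V) : GG p d m) := by
      intro k b
      rw [hΦ, hcoe]
      simp [u, mul_smul]
    have key2 : ∀ k : ℕ, ((k * p ^ d : ℕ) : ZMod (p ^ (d+1))) = 0 ↔ (k : ZMod p) = 0 := by
      intro k
      rw [ZMod.natCast_eq_zero_iff, ZMod.natCast_eq_zero_iff, pow_succ']
      exact Nat.mul_dvd_mul_iff_right (pow_pos hp.pos d)
    constructor
    · intro h c hc
      rw [Fin.sum_univ_succ] at hc
      simp only [Fin.cons_zero, Fin.cons_succ] at hc
      have h1 := key (c 0).val (fun i => c i.succ)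
      rw [ZMod.natCast_zmod_val, hc] at h1
      have h2 := h _ h1
      rw [Prod.mk_eq_zero, key2, ZMod.natCast_zmod_val] at h2
      intro i
      refine Fin.cases h2.1 (fun j => congrFun h2.2 j) i
    · intro h
      have step : ∀ g, p • g = 0 → Φ (x, y) g = 0 → g = 0 := by
        rintro ⟨a, b⟩ hg h0
        obtain ⟨k, rfl⟩ := zmod_tors p d hp a (congrArg Prod.fst hg)
        rw [key] at h0
        have h1 := h (Fin.cons (k : ZMod p) b) (by
          rw [Fin.sum_univ_succ]
          simp only [Fin.cons_zero, Fin.cons_succ]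
          exact Subtype.ext h0)
        rw [Prod.mk_eq_zero, key2]
        refine ⟨h1 0, funext fun i => h1 i.succ⟩
      intro g hg
      apply step g _ hg
      apply step (p • g)
      · rw [smul_smul, ← pow_two]
        obtain ⟨c, hc⟩ := Nat.exists_eq_add_of_le hd
        have : 2 = c + (d + 1) := by omega
        have h3 : p ^ 2 = p ^ c * p ^ (d + 1) := by rw [← pow_add, ← this]
        rw [h3, mul_smul, GG_smul_zero, smul_zero]
      · rw [map_nsmul, hg, smul_zero]
  have e1 : (GG p d m ≃+ GG p d m) ≃ {f : GG p d m →+ GG p d m // Function.Injective f} :=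
    Equiv.ofBijective (fun e => ⟨e.toAddMonoidHom, e.injective⟩) ⟨by
      intro e e' h
      ext1 g
      exact DFunLike.congr_fun (congrArg Subtype.val h) g, by
      rintro ⟨f, hf⟩
      exact ⟨AddEquiv.ofBijective f (Finite.injective_iff_bijective.1 hf), rfl⟩⟩
  have e2 : {P : GG p d m × (Fin m → V) //
      LinearIndependent (ZMod p) (Fin.cons (u P.1) P.2 : Fin (m+1) → V)} ≃
      {f : GG p d m →+ GG p d m // Function.Injective f} :=
    (Equiv.ofBijective Φ hbij).subtypeEquiv (fun P => (hinj P.1 P.2).symm)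
  have e3 : {P : GG p d m × (Fin m → V) //
      LinearIndependent (ZMod p) (Fin.cons (u P.1) P.2 : Fin (m+1) → V)} ≃
      Σ x : {x : GG p d m // ¬ (p ^ d • x = 0)}, {y : Fin m → V //
        LinearIndependent (ZMod p) (Fin.cons (u x.1) y : Fin (m+1) → V)} :=
    { toFun := fun P => ⟨⟨P.1.1, fun h => P.2.ne_zero 0 (Subtype.ext h)⟩, ⟨P.1.2, P.2⟩⟩
      invFun := fun S => ⟨(S.1.1, S.2.1), S.2.2⟩
      left_inv := fun _ => rfl
      right_inv := fun _ => rfl }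
  rw [Nat.card_congr e1, ← Nat.card_congr e2, Nat.card_congr e3, Nat.card_sigma]
  rw [Finset.sum_congr rfl (g := fun _ => ∏ i ∈ Finset.Icc 1 m, (p ^ (m+1) - p ^ i))]
  · rw [Finset.sum_const, smul_eq_mul]
    congr 1
    rw [Finset.card_univ, Fintype.card_subtype_compl]
    have h1 := GG_card_smul p d m (p ^ d) hp
    rw [Nat.gcd_eq_right (pow_dvd_pow p (Nat.le_succ d)), Nat.card_eq_fintype_card] at h1
    rw [h1]
    congr 1
    · simp [ZMod.card, ← pow_add]; ring
    · interval_cases d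
      · simp
      · simp; ring
  · intro x _
    rw [card_cons_LI (K := ZMod p) (u x.1) (fun h => x.2 (congrArg Subtype.val h)) m, hVc,
      Nat.card_zmod]

theorem statement10 (p n δ : ℕ) (hp : p.Prime) (hn : 2 ≤ n)
    (hδ : δ = 1 ∨ δ = 2) (hδn : δ ≤ n) :
    Nat.card {β : Fin (p ^ n) → Equiv.Perm (Fin (p ^ n)) //
      (∀ i j : Fin (p ^ n), i ≠ j → ∀ x : Fin (p ^ n), (β i * (β j)⁻¹) x ≠ x) ∧
      ∃ H : Subgroup (Equiv.Perm (Fin (p ^ n))),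
        (H : Set (Equiv.Perm (Fin (p ^ n)))) = Set.range β ∧
        Nonempty (Additive H ≃+ ZMod (p ^ δ) × (Fin (n - δ) → ZMod p))} =
    Nat.factorial (p ^ n) * Nat.factorial (p ^ n - 1) /
      ((p ^ n - p ^ ((δ - 1) * (n - δ + 1))) *
        ∏ i ∈ Finset.Icc 1 (n - δ), (p ^ (n - δ + 1) - p ^ i)) := by
  have : NeZero p := ⟨hp.ne_zero⟩
  obtain ⟨d, rfl⟩ : ∃ d, δ = d + 1 := ⟨δ - 1, by omega⟩
  obtain ⟨m, rfl⟩ : ∃ m, n = m + (d + 1) := ⟨n - (d + 1), by omega⟩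
  have hd : d ≤ 1 := by omega
  rw [Nat.add_sub_cancel m (d + 1), Nat.add_sub_cancel d 1]
  have hc := card_aut p d m hp hd
  have hG : Nat.card (GG p d m) = p ^ (m + (d + 1)) := by
    simp [← pow_add]; ring
  have hmain := count_tuples (p ^ (m + (d + 1))) (GG p d m) hG (pow_pos hp.pos _)
  have hpos : 0 < Nat.card (GG p d m ≃+ GG p d m) := by
    have : Finite (GG p d m ≃+ GG p d m) := Finite.of_injective (fun e => e.toEquiv) (by
      intro a b h; ext1 x; exact DFunLike.congr_fun h x)
    exact Nat.card_pos
  rw [← hmain]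
  rw [add_assoc] at hc
  rw [← hc]
  exact (Nat.mul_div_cancel _ hpos).symm
end

section
/- Let q be a prime power and let (β_0, β_1, …, β_{q−1}) be a q-tuple of permutations of a q-element set X such that G := {β_0, …, β_{q−1}} is a subgroup of the symmetric group S_q on X of order q in which every non-identity element has no fixed point. Then the number of q-tuples (γ_0, …, γ_{q−1}) of permutations of X such that {γ_0, …, γ_{q−1}} is a subgroup of S_q and there exist σ, λ ∈ S_q with γ_i = σ β_i λ for all 0 ≤ i ≤ q−1, equals q · q! / |C_{S_q}(G)|, where C_{S_q}(G) is the centralizer of G in S_q. -/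
/-- Theorem 4.5: if `G = {β_0,…,β_{q−1}}` is a subgroup of `S_q` of order `q` all of whose
non-identity elements are fixed-point-free, then the number of `q`-tuples `(γ_0,…,γ_{q−1})`
whose entries form a subgroup of `S_q` and which are equivalent to `(β_0,…,β_{q−1})`
(i.e. `γ_i = σ β_i λ` for some fixed `σ, λ`) equals `q·q!/|C_{S_q}(G)|`. -/
theorem statement11 {X : Type*} [Fintype X] (q : ℕ) (hq : IsPrimePow q)
    (hX : Fintype.card X = q)
    (G : Subgroup (Equiv.Perm X)) (β : Fin q → Equiv.Perm X)
    (hrange : Set.range β = (G : Set (Equiv.Perm X)))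
    (hcard : Nat.card G = q)
    (hfree : ∀ g ∈ G, g ≠ 1 → ∀ x : X, g x ≠ x) :
    Nat.card {γ : Fin q → Equiv.Perm X //
      (∃ H : Subgroup (Equiv.Perm X), (H : Set (Equiv.Perm X)) = Set.range γ) ∧
      ∃ σ lam : Equiv.Perm X, ∀ i : Fin q, γ i = σ * β i * lam} =
    q * Nat.factorial q / Nat.card (Subgroup.centralizer (G : Set (Equiv.Perm X))) := by
  classical
  have hβ : ∀ k ∈ G, ∃ i, β i = k := fun k hk => by
    have : k ∈ Set.range β := by rw [hrange]; exact hk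
    exact this
  have hβG : ∀ i, β i ∈ G := fun i => by
    have : β i ∈ (G : Set (Equiv.Perm X)) := by rw [← hrange]; exact ⟨i, rfl⟩
    exact this
  let C := Subgroup.centralizer (G : Set (Equiv.Perm X))
  let F : (Equiv.Perm X ⧸ C) × G → (Fin q → Equiv.Perm X) := fun p i =>
    p.1.out * (β i * p.2) * p.1.out⁻¹
  -- conjugation by an element only depends on its class modulo the centralizer
  have hout : ∀ (σ k : Equiv.Perm X), k ∈ G →
      (σ : Equiv.Perm X ⧸ C).out * k * (σ : Equiv.Perm X ⧸ C).out⁻¹ = σ * k * σ⁻¹ := by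
    intro σ k hk
    obtain ⟨c, hc⟩ := QuotientGroup.mk_out_eq_mul C σ
    rw [hc]
    have h := (Subgroup.mem_centralizer_iff.mp c.2) k hk
    rw [mul_assoc σ, ← h]
    group
  have hinj : Function.Injective F := by
    rintro ⟨a, g⟩ ⟨b, h⟩ hab
    have key : ∀ k ∈ G, a.out * (k * g) * a.out⁻¹ = b.out * (k * h) * b.out⁻¹ := by
      intro k hk
      obtain ⟨i, rfl⟩ := hβ k hk
      exact congrFun hab i
    have k1 := key 1 G.one_mem
    rw [one_mul, one_mul] at k1
    have hk : ∀ k ∈ G, a.out * k * a.out⁻¹ = b.out * k * b.out⁻¹ := by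
      intro k hk
      have h2 := key k hk
      have e1 : a.out * (k * g) * a.out⁻¹ = (a.out * k * a.out⁻¹) * (a.out * g * a.out⁻¹) := by
        group
      have e2 : b.out * (k * h) * b.out⁻¹ = (b.out * k * b.out⁻¹) * (b.out * h * b.out⁻¹) := by
        group
      rw [e1, e2, k1] at h2
      exact mul_right_cancel h2
    have hC : a.out⁻¹ * b.out ∈ C := by
      refine Subgroup.mem_centralizer_iff.mpr fun k hkG => ?_
      have h3 := hk k hkG
      have h4 : k = a.out⁻¹ * (b.out * k * b.out⁻¹) * a.out := by
        rw [← h3]; group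
      calc k * (a.out⁻¹ * b.out)
          = (a.out⁻¹ * (b.out * k * b.out⁻¹) * a.out) * (a.out⁻¹ * b.out) := by rw [← h4]
        _ = a.out⁻¹ * b.out * k := by group
    have hab' : a = b := by
      have := QuotientGroup.eq.mpr hC
      rwa [QuotientGroup.out_eq', QuotientGroup.out_eq'] at this
    subst hab'
    have : (g : Equiv.Perm X) = h := mul_left_cancel (mul_right_cancel k1)
    rw [Subtype.ext this]
  have hset : ∀ γ : Fin q → Equiv.Perm X,
      ((∃ H : Subgroup (Equiv.Perm X), (H : Set (Equiv.Perm X)) = Set.range γ) ∧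
      ∃ σ lam : Equiv.Perm X, ∀ i : Fin q, γ i = σ * β i * lam) ↔ γ ∈ Set.range F := by
    intro γ
    constructor
    · rintro ⟨⟨H, hH⟩, σ, lam, hγ⟩
      have h1 : (1 : Equiv.Perm X) ∈ Set.range γ := by rw [← hH]; exact H.one_mem
      obtain ⟨j, hj⟩ := h1
      rw [hγ] at hj
      have hl : lam = (β j)⁻¹ * σ⁻¹ := by
        rw [← mul_inv_rev]; exact eq_inv_of_mul_eq_one_right hj
      refine ⟨((σ : Equiv.Perm X ⧸ C), ⟨(β j)⁻¹, G.inv_mem (hβG j)⟩), ?_⟩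
      funext i
      change (σ : Equiv.Perm X ⧸ C).out * (β i * (β j)⁻¹) * (σ : Equiv.Perm X ⧸ C).out⁻¹ = γ i
      rw [hout σ _ (G.mul_mem (hβG i) (G.inv_mem (hβG j))), hγ, hl]
      group
    · rintro ⟨⟨a, g⟩, rfl⟩
      refine ⟨⟨G.map (MulAut.conj a.out).toMonoidHom, ?_⟩, a.out, g * a.out⁻¹, ?_⟩
      · ext x
        constructor
        · rintro ⟨k, hk, rfl⟩
          obtain ⟨i, hi⟩ := hβ (k * (g : Equiv.Perm X)⁻¹) (G.mul_mem hk (G.inv_mem g.2))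
          refine ⟨i, ?_⟩
          simp [F, hi]
        · rintro ⟨i, rfl⟩
          exact ⟨β i * g, G.mul_mem (hβG i) g.2, by simp [F]⟩
      · intro i
        simp only [F]
        group
  have hcount : Nat.card {γ : Fin q → Equiv.Perm X //
      (∃ H : Subgroup (Equiv.Perm X), (H : Set (Equiv.Perm X)) = Set.range γ) ∧
      ∃ σ lam : Equiv.Perm X, ∀ i : Fin q, γ i = σ * β i * lam} =
      Nat.card (Equiv.Perm X ⧸ C) * Nat.card G := by
    rw [← Nat.card_prod]
    exact Nat.card_congr
      ((Equiv.subtypeEquivRight hset).trans (Equiv.ofInjective F hinj).symm)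
  have hC := Subgroup.card_eq_card_quotient_mul_card_subgroup C
  have hS : Nat.card (Equiv.Perm X) = q.factorial := by
    rw [Nat.card_eq_fintype_card, Fintype.card_perm, hX]
  rw [hcount, hcard]
  refine (Nat.div_eq_of_eq_mul_left Nat.card_pos ?_).symm
  rw [← hS, hC]
  ring
end

section
/- Let p be a prime, n ≥ 2 an integer, q = p^n, and let e be an integer with 1 ≤ e < n/2. Then the number of q-tuples (β_0, β_1, …, β_{q−1}) of permutations of {0,…,p^n−1} such that β_i β_j^{−1} has no fixed point for all i ≠ j and the set {β_0, …, β_{q−1}} is a subgroup of S_q isomorphic to Z_{p^e} × Z_{p^{n−e}} equals (p^n)! · (p^n − 1)! / ( p^{2e} · φ(p^e) · φ(p^{n−e}) ), where φ denotes Euler's totient function. -/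
-- counting part
section
variable {A X : Type} [AddCommGroup A] [Fintype A] [Fintype X] [DecidableEq A] [DecidableEq X]

def IsReg (ρ : A → Equiv.Perm X) : Prop :=
  (∀ a b, ρ (a + b) = ρ a * ρ b) ∧ ∀ a b, a ≠ b → ∀ x, ρ a x ≠ ρ b x

noncomputable def regEquiv (hc : Fintype.card A = Fintype.card X) :
    {ρ : A → Equiv.Perm X // IsReg ρ} × X ≃ (A ≃ X) where
  toFun r := Equiv.ofBijective (fun a => r.1.1 a r.2) (by
    rw [Fintype.bijective_iff_injective_and_card]
    refine ⟨fun a b h => ?_, hc⟩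
    by_contra hab
    exact r.1.2.2 a b hab _ h)
  invFun b := ⟨⟨fun a => (b.symm.trans (Equiv.addLeft a)).trans b, by
    refine ⟨fun a c => ?_, fun a c hac x h => hac ?_⟩
    · ext x; simp [add_assoc]
    · simpa using h⟩, b 0⟩
  left_inv := by
    rintro ⟨⟨ρ, h1, h2⟩, x⟩
    have h0 : ρ 0 = 1 := by
      have := h1 0 0
      simpa using this
    refine Prod.ext (Subtype.ext ?_) ?_
    · funext a
      ext y
      obtain ⟨c, rfl⟩ : ∃ c, ρ c x = y := by
        have : Function.Bijective (fun a => ρ a x) := by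
          rw [Fintype.bijective_iff_injective_and_card]
          refine ⟨fun a b h => ?_, hc⟩
          by_contra hab
          exact h2 a b hab _ h
        exact this.2 y
      have : (Equiv.ofBijective (fun a => ρ a x) (by
          rw [Fintype.bijective_iff_injective_and_card]
          refine ⟨fun a b h => ?_, hc⟩
          by_contra hab
          exact h2 a b hab _ h)).symm (ρ c x) = c := by
        rw [Equiv.symm_apply_eq]; rfl
      simp [this, h1]
    · simp [h0]
  right_inv := by
    intro b
    ext a
    simp

lemma card_reg (hc : Fintype.card A = Fintype.card X) :
    Nat.card {ρ : A → Equiv.Perm X // IsReg ρ} = (Fintype.card X - 1).factorial := by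
  have h := Nat.card_congr (regEquiv (A := A) (X := X) hc)
  have e : A ≃ X := Fintype.equivOfCardEq hc
  have h0 : 0 < Fintype.card X := by
    rw [← hc]; exact Fintype.card_pos
  rw [Nat.card_prod, Nat.card_eq_fintype_card (α := X), Nat.card_eq_fintype_card (α := A ≃ X),
    Fintype.card_equiv e, hc, ← Nat.mul_factorial_pred h0.ne', mul_comm] at h
  exact Nat.eq_of_mul_eq_mul_left h0 h

def IsT (A : Type) [AddCommGroup A] (β : X → Equiv.Perm X) : Prop :=
  (∀ i j : X, i ≠ j → ∀ x : X, (β i * (β j)⁻¹) x ≠ x) ∧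
      ∃ H : Subgroup (Equiv.Perm X),
        (H : Set (Equiv.Perm X)) = Set.range β ∧
        Nonempty (Additive H ≃+ A)

lemma free_iff (β γ : Equiv.Perm X) :
    (∀ x, (β * γ⁻¹) x ≠ x) ↔ ∀ x, β x ≠ γ x := by
  constructor
  · intro h x hx
    apply h (γ x)
    simpa using hx
  · intro h x hx
    apply h (γ⁻¹ x)
    simpa using hx

/-- the pairs -/
def IsE (β : X → Equiv.Perm X) (σ : X ≃ A) : Prop := IsReg (β ∘ σ.symm)

lemma isT_iff (hX : Nonempty X) (β : X → Equiv.Perm X) : IsT A β ↔ ∃ σ : X ≃ A, IsE β σ := by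
  constructor
  · rintro ⟨h1, H, hH, ⟨ψ⟩⟩
    have hinj : Function.Injective β := by
      intro i j hij
      by_contra hne
      obtain ⟨x⟩ := hX
      exact (free_iff _ _).1 (h1 i j hne) x (by rw [hij])
    let τ : X ≃ H := (Equiv.ofInjective β hinj).trans (Equiv.setCongr hH.symm)
    have hτ : ∀ i, ((τ i : H) : Equiv.Perm X) = β i := fun i => rfl
    let σ : X ≃ A := (τ.trans Additive.ofMul).trans ψ.toEquiv
    have hσ : ∀ a, β (σ.symm a) = (Additive.toMul (ψ.symm a) : H) := by
      intro a
      rw [← hτ]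
      simp [σ]
    refine ⟨σ, ?_, ?_⟩
    · intro a b
      simp [hσ]
    · intro a b hab
      exact (free_iff _ _).1 (h1 _ _ (fun h => hab (σ.symm.injective h)))
  · rintro ⟨σ, h1, h2⟩
    refine ⟨fun i j hij => (free_iff _ _).2 ?_, ?_⟩
    · have := h2 (σ i) (σ j) (fun h => hij (σ.injective h))
      simpa using this
    · let f : Multiplicative A →* Equiv.Perm X := MonoidHom.mk' (fun a => β (σ.symm a.toAdd))
        (fun a b => h1 _ _)
      have hf : Function.Injective f := by
        intro a b hab
        by_contra hne
        obtain ⟨x⟩ := hX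
        exact h2 a.toAdd b.toAdd hne x (by
          change f a x = f b x
          rw [hab])
      refine ⟨f.range, ?_, ⟨?_⟩⟩
      · ext g
        simp only [MonoidHom.coe_range, Set.mem_range]
        constructor
        · rintro ⟨a, rfl⟩; exact ⟨_, rfl⟩
        · rintro ⟨i, rfl⟩; exact ⟨Multiplicative.ofAdd (σ i), by simp [f]⟩
      · exact (MulEquiv.toAdditive (f.ofInjective hf)).symm.trans (AddEquiv.additiveMultiplicative A)

def fibEquiv (hX : Nonempty X) (β : X → Equiv.Perm X) (σ₀ : X ≃ A) (h₀ : IsE β σ₀) :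
    {σ : X ≃ A // IsE β σ} ≃ (A ≃+ A) where
  toFun σ := AddEquiv.mk' (σ₀.symm.trans σ.1) (by
    intro a b
    have hinj : Function.Injective β := by
      intro i j hij
      by_contra hne
      obtain ⟨x⟩ := hX
      have := h₀.2 (σ₀ i) (σ₀ j) (fun h => hne (σ₀.injective h)) x
      simp [hij] at this
    have h1 := h₀.1 a b
    have h2 := σ.2.1 (σ.1 (σ₀.symm a)) (σ.1 (σ₀.symm b))
    simp only [Function.comp, Equiv.symm_apply_apply] at h1 h2
    rw [← h1] at h2
    have := hinj h2
    simp [← this])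
  invFun φ := ⟨σ₀.trans φ.toEquiv, by
    refine ⟨fun a b => ?_, fun a b hab => ?_⟩
    · have := h₀.1 (φ.symm a) (φ.symm b)
      rw [← map_add] at this
      exact this
    · exact h₀.2 (φ.symm a) (φ.symm b) (fun h => hab (φ.symm.injective h))⟩
  left_inv σ := by
    ext x
    change σ.1 (σ₀.symm (σ₀ x)) = σ.1 x
    simp
  right_inv φ := by ext; simp [AddEquiv.mk']

def pairEquiv : {z : (X → Equiv.Perm X) × (X ≃ A) // IsE z.1 z.2} ≃
    {ρ : A → Equiv.Perm X // IsReg ρ} × (X ≃ A) where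
  toFun z := ⟨⟨z.1.1 ∘ z.1.2.symm, z.2⟩, z.1.2⟩
  invFun w := ⟨⟨w.1.1 ∘ w.2, w.2⟩, by
    have : (w.1.1 ∘ w.2) ∘ w.2.symm = w.1.1 := by ext; simp
    unfold IsE
    simp only [this]
    exact w.1.2⟩
  left_inv z := by
    refine Subtype.ext (Prod.ext ?_ rfl)
    ext; simp
  right_inv w := by
    refine Prod.ext (Subtype.ext ?_) rfl
    ext; simp

def sigE (hX : Nonempty X) : {z : (X → Equiv.Perm X) × (X ≃ A) // IsE z.1 z.2} ≃
    (Σ β : {β : X → Equiv.Perm X // IsT A β}, {σ : X ≃ A // IsE β.1 σ}) where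
  toFun z := ⟨⟨z.1.1, (isT_iff hX _).2 ⟨_, z.2⟩⟩, ⟨z.1.2, z.2⟩⟩
  invFun w := ⟨⟨w.1.1, w.2.1⟩, w.2.2⟩
  left_inv _ := rfl
  right_inv _ := rfl

lemma card_T (hX : Nonempty X) (hc : Fintype.card A = Fintype.card X) :
    Nat.card {β : X → Equiv.Perm X // IsT A β} * Nat.card (A ≃+ A) =
      (Fintype.card X).factorial * (Fintype.card X - 1).factorial := by
  have h := Nat.card_congr ((sigE (A := A) hX).symm.trans pairEquiv)
  have e : X ≃ A := Fintype.equivOfCardEq hc.symm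
  have hs : ∀ β : {β : X → Equiv.Perm X // IsT A β},
      Nat.card {σ : X ≃ A // IsE β.1 σ} = Nat.card (A ≃+ A) := by
    intro β
    obtain ⟨σ₀, h₀⟩ := (isT_iff hX _).1 β.2
    exact Nat.card_congr (fibEquiv hX _ σ₀ h₀)
  have : Fintype {β : X → Equiv.Perm X // IsT A β} := Fintype.ofFinite _
  rw [Nat.card_sigma, Finset.sum_congr rfl (fun β _ => hs β), Nat.card_prod, card_reg hc,
    Nat.card_eq_fintype_card (α := X ≃ A), Fintype.card_equiv e] at h
  simp only [Finset.sum_const, Finset.card_univ, smul_eq_mul] at h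
  rw [Nat.card_eq_fintype_card, h, mul_comm]
end
section
variable {p e f : ℕ}

lemma card_hom (hp : p.Prime) (hef : e < f) :
    Nat.card (ZMod (p ^ e) →+ ZMod (p ^ f)) = p ^ e := by
  have : NeZero (p ^ f) := ⟨(pow_pos hp.pos _).ne'⟩
  let m : ZMod (p ^ f) →+ ZMod (p ^ f) := AddMonoidHom.mulLeft ((p ^ e : ℕ) : ZMod (p ^ f))
  let E : (ZMod (p ^ e) →+ ZMod (p ^ f)) ≃ m.ker :=
    (ZMod.lift (p ^ e)).symm.trans (Equiv.subtypeEquiv (zmultiplesHom _).symm (by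
      intro g
      rw [AddMonoidHom.mem_ker]
      simp only [m, AddMonoidHom.coe_mulLeft]
      have : g ((p ^ e : ℕ) : ℤ) = ((p ^ e : ℕ) : ZMod (p ^ f)) * g 1 := by
        rw [← nsmul_eq_mul, ← map_nsmul]; simp
      rw [this]; rfl))
  rw [Nat.card_congr E]
  have h := m.ker.card_mul_index
  rw [AddSubgroup.index_ker] at h
  have hr : m.range = AddSubgroup.zmultiples ((p ^ e : ℕ) : ZMod (p ^ f)) := by
    ext x
    rw [AddSubgroup.mem_zmultiples_iff, AddMonoidHom.mem_range]
    constructor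
    · rintro ⟨y, rfl⟩
      refine ⟨y.val, ?_⟩
      simp [m, mul_comm]
    · rintro ⟨k, rfl⟩
      exact ⟨k, by simp [m, mul_comm]⟩
  rw [hr, Nat.card_zmultiples, ZMod.addOrderOf_coe _ (pow_pos hp.pos _).ne', Nat.card_zmod,
    Nat.gcd_eq_right (pow_dvd_pow p hef.le), Nat.pow_div hef.le hp.pos] at h
  have h2 : p ^ f = p ^ e * p ^ (f - e) := by rw [← pow_add]; congr 1; omega
  exact Nat.eq_of_mul_eq_mul_right (pow_pos hp.pos _) (h.trans h2)

lemma unit_iff (hp : p.Prime) (he : 1 ≤ e) (x : ZMod (p ^ e)) :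
    IsUnit x ↔ ¬ (p : ZMod (p ^ e)) ∣ x := by
  have : NeZero (p ^ e) := ⟨(pow_pos hp.pos _).ne'⟩
  constructor
  · rintro h hd
    have h2 : IsUnit (p : ZMod (p ^ e)) := isUnit_of_dvd_unit hd h
    rw [ZMod.isUnit_iff_coprime] at h2
    have := Nat.Coprime.coprime_dvd_right (dvd_pow_self p (by omega : e ≠ 0)) h2
    rw [Nat.coprime_self] at this
    exact hp.one_lt.ne' this
  · intro h
    rw [← ZMod.natCast_zmod_val x, ZMod.isUnit_iff_coprime]
    apply Nat.Coprime.pow_right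
    rw [Nat.coprime_comm, hp.coprime_iff_not_dvd]
    intro hd
    apply h
    rw [← ZMod.natCast_zmod_val x]
    exact Nat.cast_dvd_cast hd

lemma kill (he : 1 ≤ e) (x : ZMod (p ^ e)) (h : (p : ZMod (p ^ e)) ∣ x) :
    (p : ZMod (p ^ e)) ^ (e - 1) * x = 0 := by
  obtain ⟨y, rfl⟩ := h
  rw [← mul_assoc, ← pow_succ, Nat.sub_add_cancel he]
  have : ((p ^ e : ℕ) : ZMod (p ^ e)) = 0 := ZMod.natCast_self _
  push_cast at this
  rw [this, zero_mul]

lemma pow_ne (hp : p.Prime) (he : 1 ≤ e) : (p : ZMod (p ^ e)) ^ (e - 1) ≠ 0 := by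
  intro h
  have h' : ((p ^ (e - 1) : ℕ) : ZMod (p ^ e)) = 0 := by push_cast; exact h
  rw [ZMod.natCast_eq_zero_iff, Nat.pow_dvd_pow_iff_le_right hp.one_lt] at h'
  omega

/-- reduction -/
def red (p e f : ℕ) (hef : e < f) : ZMod (p ^ f) →+* ZMod (p ^ e) :=
  ZMod.castHom (pow_dvd_pow p hef.le) _

lemma hom_lin (hp : p.Prime) {B : Type} [AddCommGroup B] (g : ZMod (p ^ e) →+ B) (x : ZMod (p ^ e)) :
    g x = x.val • g 1 := by
  have : NeZero (p ^ e) := ⟨(pow_pos hp.pos _).ne'⟩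
  rw [← map_nsmul]; simp

lemma red_dvd (hp : p.Prime) (he : 1 ≤ e) (hef : e < f) (γ : ZMod (p ^ e) →+ ZMod (p ^ f)) :
    (p : ZMod (p ^ e)) ∣ red p e f hef (γ 1) := by
  have : NeZero (p ^ f) := ⟨(pow_pos hp.pos _).ne'⟩
  have h : ((p ^ e : ℕ) : ZMod (p ^ f)) * γ 1 = 0 := by
    rw [← nsmul_eq_mul, ← map_nsmul]; simp
  have hd : (p : ZMod (p ^ f)) ∣ γ 1 := by
    by_contra hc
    have hu := (unit_iff hp (by omega) _).2 hc
    rw [hu.mul_left_eq_zero, ZMod.natCast_eq_zero_iff, Nat.pow_dvd_pow_iff_le_right hp.one_lt] at h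
    omega
  have := map_dvd (red p e f hef) hd
  simpa using this

/-- matrix -/
def mat (hef : e < f) (a b : ZMod (p ^ e)) (γ : ZMod (p ^ e) →+ ZMod (p ^ f)) (d : ZMod (p ^ f)) :
    ZMod (p ^ e) × ZMod (p ^ f) →+ ZMod (p ^ e) × ZMod (p ^ f) where
  toFun z := (z.1 * a + red p e f hef z.2 * b, γ z.1 + z.2 * d)
  map_zero' := by simp
  map_add' z w := by
    refine Prod.ext ?_ ?_
    · simp; ring
    · simp; ring

def endEquiv (hp : p.Prime) (hef : e < f) :
    (ZMod (p ^ e) × ZMod (p ^ f) →+ ZMod (p ^ e) × ZMod (p ^ f)) ≃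
    (ZMod (p ^ e) × ZMod (p ^ e)) × (ZMod (p ^ e) →+ ZMod (p ^ f)) × ZMod (p ^ f) where
  toFun g := (((g (1, 0)).1, (g (0, 1)).1),
    ((AddMonoidHom.snd _ _).comp g).comp (AddMonoidHom.inl _ _), (g (0, 1)).2)
  invFun w := mat hef w.1.1 w.1.2 w.2.1 w.2.2
  left_inv g := by
    have : NeZero (p ^ f) := ⟨(pow_pos hp.pos _).ne'⟩
    have : NeZero (p ^ e) := ⟨(pow_pos hp.pos _).ne'⟩
    have h1 : ∀ x, g (x, 0) = x.val • g (1, 0) := fun x =>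
      hom_lin hp (g.comp (AddMonoidHom.inl _ _)) x
    have h2 : ∀ x, g (0, x) = x.val • g (0, 1) := fun x =>
      hom_lin hp (g.comp (AddMonoidHom.inr _ _)) x
    have hr : ∀ y : ZMod (p ^ f), red p e f hef y = (y.val : ZMod (p ^ e)) := by
      intro y
      conv_lhs => rw [← ZMod.natCast_zmod_val y]
      rw [map_natCast]
    apply AddMonoidHom.ext
    rintro ⟨x, y⟩
    have h3 : g (x, y) = g (x, 0) + g (0, y) := by rw [← map_add]; simp
    rw [h3]
    refine Prod.ext ?_ ?_
    · rw [h1, h2]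
      simp [mat, hr]
    · rw [h2]
      simp [mat]
  right_inv w := by
    obtain ⟨⟨a, b⟩, γ, d⟩ := w
    refine Prod.ext (Prod.ext ?_ ?_) (Prod.ext ?_ ?_)
    · simp [mat]
    · simp [mat]
    · ext; simp [mat]
    · simp [mat]

lemma mat_schur (hp : p.Prime) (hef : e < f) (a b : ZMod (p ^ e))
    (γ : ZMod (p ^ e) →+ ZMod (p ^ f)) (d d' : ZMod (p ^ f)) (hd : d' * d = 1) (x : ZMod (p ^ e)) :
    mat hef a b γ d (x, - (d' * γ x)) =
      (x * (a - red p e f hef d' * b * red p e f hef (γ 1)), 0) := by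
  have : NeZero (p ^ e) := ⟨(pow_pos hp.pos _).ne'⟩
  have h : red p e f hef (γ x) = x * red p e f hef (γ 1) := by
    rw [hom_lin hp γ x]
    simp
  refine Prod.ext ?_ ?_
  · simp [mat, h]; ring
  · simp only [mat, AddMonoidHom.coe_mk, ZeroHom.coe_mk]
    linear_combination (-γ x) * hd

lemma mat_inj (hp : p.Prime) (he : 1 ≤ e) (hef : e < f) (a b : ZMod (p ^ e))
    (γ : ZMod (p ^ e) →+ ZMod (p ^ f)) (d : ZMod (p ^ f)) :
    Function.Bijective (mat hef a b γ d) ↔ IsUnit a ∧ IsUnit d := by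
  have : NeZero (p ^ f) := ⟨(pow_pos hp.pos _).ne'⟩
  have : NeZero (p ^ e) := ⟨(pow_pos hp.pos _).ne'⟩
  rw [← Finite.injective_iff_bijective, injective_iff_map_eq_zero]
  have hγ := red_dvd hp he hef γ
  constructor
  · intro H
    have hd : IsUnit d := by
      by_contra hd
      rw [unit_iff hp (by omega), not_not] at hd
      have := H (0, (p : ZMod (p ^ f)) ^ (f - 1)) (by
        refine Prod.ext ?_ ?_
        · have h0 : (p : ZMod (p ^ e)) ^ (f - 1) = 0 := by
            have : ((p ^ (f - 1) : ℕ) : ZMod (p ^ e)) = 0 := by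
              rw [ZMod.natCast_eq_zero_iff]
              exact pow_dvd_pow p (by omega)
            push_cast at this
            exact this
          simp [mat, h0]
        · simpa [mat] using kill (by omega) d hd)
      exact pow_ne hp (by omega) (Prod.ext_iff.1 this).2
    refine ⟨?_, hd⟩
    by_contra ha
    rw [unit_iff hp (by omega), not_not] at ha
    obtain ⟨d', hd'⟩ := hd.exists_left_inv
    have := H _ ((mat_schur hp hef a b γ d d' hd' ((p : ZMod (p ^ e)) ^ (e - 1))).trans (by
      rw [kill he _ (dvd_sub ha (Dvd.dvd.mul_left hγ _))]; rfl))
    exact pow_ne hp he (Prod.ext_iff.1 this).1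
  · rintro ⟨ha, hd⟩ ⟨x, y⟩ h
    obtain ⟨d', hd'⟩ := hd.exists_left_inv
    have h2 : γ x + y * d = 0 := (Prod.ext_iff.1 h).2
    have hy : y = - (d' * γ x) := by linear_combination d' * h2 - y * hd'
    rw [hy, mat_schur hp hef a b γ d d' hd' x] at h
    have h1 := (Prod.ext_iff.1 h).1
    simp only [Prod.fst_zero] at h1
    have hu : IsUnit (a - red p e f hef d' * b * red p e f hef (γ 1)) := by
      rw [unit_iff hp he] at ha ⊢
      intro hc
      apply ha
      have := dvd_add hc (Dvd.dvd.mul_left hγ (red p e f hef d' * b))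
      simpa using this
    rw [hu.mul_left_eq_zero] at h1
    subst h1
    rw [hy]; simp

noncomputable def autEquiv {A : Type} [AddCommGroup A] :
    (A ≃+ A) ≃ {g : A →+ A // Function.Bijective g} where
  toFun g := ⟨g.toAddMonoidHom, g.bijective⟩
  invFun g := AddEquiv.ofBijective g.1 g.2
  left_inv g := by ext; rfl
  right_inv g := by ext; rfl

def shuffle {A B C D : Type} (P : A → Prop) (Q : D → Prop) :
    {w : (A × B) × C × D // P w.1.1 ∧ Q w.2.2} ≃ {a // P a} × B × C × {d // Q d} where
  toFun w := (⟨w.1.1.1, w.2.1⟩, w.1.1.2, w.1.2.1, ⟨w.1.2.2, w.2.2⟩)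
  invFun z := ⟨((z.1.1, z.2.1), z.2.2.1, z.2.2.2.1), z.1.2, z.2.2.2.2⟩
  left_inv _ := rfl
  right_inv _ := rfl

lemma card_units (hp : p.Prime) : Nat.card {x : ZMod (p ^ e) // IsUnit x} = Nat.totient (p ^ e) := by
  have : NeZero (p ^ e) := ⟨(pow_pos hp.pos _).ne'⟩
  rw [← ZMod.card_units_eq_totient, ← Nat.card_eq_fintype_card]
  exact (Nat.card_congr (Submonoid.unitsTypeEquivIsUnitSubmonoid (M := ZMod (p ^ e))).toEquiv).symm

lemma card_aut_s3 (hp : p.Prime) (he : 1 ≤ e) (hef : e < f) :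
    Nat.card ((ZMod (p ^ e) × ZMod (p ^ f)) ≃+ (ZMod (p ^ e) × ZMod (p ^ f))) =
      p ^ (2 * e) * Nat.totient (p ^ e) * Nat.totient (p ^ f) := by
  have E := (autEquiv (A := ZMod (p ^ e) × ZMod (p ^ f))).trans
    ((Equiv.subtypeEquiv (q := fun w => IsUnit w.1.1 ∧ IsUnit w.2.2) (endEquiv hp hef) (by
      intro g
      obtain ⟨w, rfl⟩ := (endEquiv hp hef).symm.surjective g
      rw [Equiv.apply_symm_apply]
      exact mat_inj hp he hef _ _ _ _)).trans (shuffle _ _))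
  rw [Nat.card_congr E]
  simp only [Nat.card_prod, card_hom hp hef, card_units hp, Nat.card_zmod]
  ring
end


/-- Theorem 4.11, case `e < n/2`: the number of permutation polynomial tuples `(β_0,…,β_{q−1})`
whose entries form a subgroup of `S_q` isomorphic to `Z_{p^e} × Z_{p^{n−e}}` (the number of
`e`-Klenian polynomials over `F_q`) equals `(p^n)!(p^n−1)! / (p^{2e} φ(p^e) φ(p^{n−e}))`. -/
theorem statement16 (p n e : ℕ) (hp : p.Prime) (hn : 2 ≤ n)
    (he1 : 1 ≤ e) (he2 : 2 * e < n) :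
    Nat.card {β : Fin (p ^ n) → Equiv.Perm (Fin (p ^ n)) //
      (∀ i j : Fin (p ^ n), i ≠ j → ∀ x : Fin (p ^ n), (β i * (β j)⁻¹) x ≠ x) ∧
      ∃ H : Subgroup (Equiv.Perm (Fin (p ^ n))),
        (H : Set (Equiv.Perm (Fin (p ^ n)))) = Set.range β ∧
        Nonempty (Additive H ≃+ ZMod (p ^ e) × ZMod (p ^ (n - e)))} =
    Nat.factorial (p ^ n) * Nat.factorial (p ^ n - 1) /
      (p ^ (2 * e) * Nat.totient (p ^ e) * Nat.totient (p ^ (n - e))) := by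
  have hef : e < n - e := by omega
  have : NeZero (p ^ e) := ⟨(pow_pos hp.pos _).ne'⟩
  have : NeZero (p ^ (n - e)) := ⟨(pow_pos hp.pos _).ne'⟩
  have h := card_T (A := ZMod (p ^ e) × ZMod (p ^ (n - e))) (X := Fin (p ^ n))
    ⟨⟨0, pow_pos hp.pos _⟩⟩ (by
      rw [Fintype.card_prod, ZMod.card, ZMod.card, Fintype.card_fin, ← pow_add]
      congr 1
      omega)
  rw [card_aut_s3 hp he1 hef, Fintype.card_fin] at h
  refine (Nat.div_eq_of_eq_mul_left ?_ h.symm).symm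
  have h1 := Nat.totient_pos.2 (pow_pos hp.pos e)
  have h2 := Nat.totient_pos.2 (pow_pos hp.pos (n - e))
  have h3 := pow_pos hp.pos (2 * e)
  positivity
end

section
/- Let p be a prime, n ≥ 2 an even integer, q = p^n, and e = n/2. Then the number of q-tuples (β_0, β_1, …, β_{q−1}) of permutations of {0,…,p^n−1} such that β_i β_j^{−1} has no fixed point for all i ≠ j and the set {β_0, …, β_{q−1}} is a subgroup of S_q isomorphic to Z_{p^e} × Z_{p^e} equals (p^n)! · (p^n − 1)! / ( φ(p^e)^2 · (p^{2e} + p^{2e−1}) ), where φ denotes Euler's totient function. -/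
/-- translation by `a`, transported along `g` -/
def trA {A X : Type*} [AddGroup A] (g : A ≃ X) (a : A) : Equiv.Perm X :=
  (g.symm.trans (Equiv.addLeft a)).trans g

lemma trA_apply {A X : Type*} [AddGroup A] (g : A ≃ X) (a b : A) :
    trA g a (g b) = g (a + b) := by simp [trA]

lemma trA_add {A X : Type*} [AddGroup A] (g : A ≃ X) (a b : A) :
    trA g (a + b) = trA g a * trA g b := by
  ext x
  obtain ⟨c, rfl⟩ := g.surjective x
  simp [trA_apply, add_assoc]

lemma trA_fixed {A X : Type*} [AddGroup A] (g : A ≃ X) (a : A) (x : X)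
    (h : trA g a x = x) : a = 0 := by
  obtain ⟨c, rfl⟩ := g.surjective x
  rw [trA_apply] at h
  simpa using g.injective h

/-- `trA` as a homomorphism -/
def trHom {A X : Type*} [AddGroup A] (g : A ≃ X) : Multiplicative A →* Equiv.Perm X :=
  MonoidHom.mk' (fun a => trA g a.toAdd) (fun _ _ => trA_add g _ _)

/-- the tuples to be counted -/
def Good (A X : Type*) [AddGroup A] (β : X → Equiv.Perm X) : Prop :=
  (∀ i j : X, i ≠ j → ∀ x : X, (β i * (β j)⁻¹) x ≠ x) ∧
      ∃ H : Subgroup (Equiv.Perm X),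
        (H : Set (Equiv.Perm X)) = Set.range β ∧
        Nonempty (Additive H ≃+ A)

lemma Good.inj {A X : Type*} [AddGroup A] {β : X → Equiv.Perm X} (h : Good A X β) :
    Function.Injective β := by
  intro i j hij
  by_contra hne
  exact h.1 i j hne i (by simp [hij])

lemma Good.exists_psi {A X : Type*} [AddGroup A] {β : X → Equiv.Perm X} (h : Good A X β) :
    ∃ ψ : A → Equiv.Perm X, (∀ a b, ψ (a + b) = ψ a * ψ b) ∧ Function.Injective ψ ∧
      Set.range ψ = Set.range β := by
  obtain ⟨h1, H, hH, ⟨f⟩⟩ := h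
  refine ⟨fun a => ((f.symm a).toMul : Equiv.Perm X), ?_, ?_, ?_⟩
  · intro a b; simp
  · intro a b hab
    have := Subtype.ext hab
    exact f.symm.injective (Additive.toMul.injective this)
  · rw [← hH]
    ext x
    constructor
    · rintro ⟨a, rfl⟩
      exact (f.symm a).toMul.2
    · intro hx
      exact ⟨f (Additive.ofMul ⟨x, hx⟩), by simp⟩

lemma psi_free {A X : Type*} [AddGroup A] {β : X → Equiv.Perm X} (h : Good A X β)
    (ψ : A → Equiv.Perm X)
    (hinj : Function.Injective ψ) (hr : Set.range ψ = Set.range β) (a b : A) (x : X)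
    (hab : ψ a x = ψ b x) : a = b := by
  obtain ⟨i, hi⟩ : ψ a ∈ Set.range β := hr ▸ ⟨a, rfl⟩
  obtain ⟨j, hj⟩ : ψ b ∈ Set.range β := hr ▸ ⟨b, rfl⟩
  by_cases hij : i = j
  · subst hij; exact hinj (hi.symm.trans hj)
  · exact absurd (by simp [hi, hj, hab]) (h.1 i j hij (ψ b x))

lemma good_tr {A X : Type*} [AddGroup A] (g : A ≃ X) (σ : X ≃ A) :
    Good A X (fun i => trA g (σ i)) := by
  have hinj : Function.Injective (trHom g) := by
    rw [injective_iff_map_eq_one]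
    intro a ha
    have : trA g a.toAdd (g 0) = g 0 := by
      change trHom g a (g 0) = g 0
      rw [ha]; rfl
    exact trA_fixed g _ _ this
  refine ⟨?_, (trHom g).range, ?_, ⟨?_⟩⟩
  · intro i j hij x hx
    apply hij
    apply σ.injective
    have h2 : trA g (σ i - σ j) * trA g (σ j) = trA g (σ i) := by
      rw [← trA_add]; simp
    simp only [← h2, mul_inv_cancel_right] at hx
    exact sub_eq_zero.1 (trA_fixed g _ _ hx)
  · ext x
    constructor
    · rintro ⟨a, rfl⟩
      exact ⟨σ.symm a.toAdd, by simp [trHom]⟩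
    · rintro ⟨i, rfl⟩
      exact ⟨Multiplicative.ofAdd (σ i), rfl⟩
  · exact (MulEquiv.toAdditive (MonoidHom.ofInjective hinj).symm).trans
      (AddEquiv.additiveMultiplicative A)

theorem count_good {A X : Type*} [AddGroup A] [Finite A] [Finite X] (x0 : X)
    (hc : Nat.card A = Nat.card X) :
    Nat.card {β // Good A X β} * Nat.card (A ≃+ A) =
      Nat.card {g : A ≃ X // g 0 = x0} * Nat.card (X ≃ A) := by
  have key : ∀ β : {β // Good A X β}, ∃ ψ : A → Equiv.Perm X,
    (∀ a b, ψ (a + b) = ψ a * ψ b) ∧ Function.Injective ψ ∧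
      Set.range ψ = Set.range β.1 := fun β => β.2.exists_psi
  choose ψ hadd hinj hr using key
  have h0 : ∀ β, ψ β 0 = 1 := by
    intro β; have := hadd β 0 0; simpa using this
  have hg : ∀ (β) (α : A ≃+ A), Function.Bijective (fun a => ψ β (α a) x0) := by
    intro β α
    rw [Nat.bijective_iff_injective_and_card]
    refine ⟨?_, hc⟩
    intro a b hab
    exact α.injective (psi_free β.2 (ψ β) (hinj β) (hr β) _ _ x0 hab)
  have hs : ∀ β, ∃ s : X → A, ∀ i, ψ β (s i) = β.1 i := by
    intro β
    have : ∀ i, ∃ a, ψ β a = β.1 i := fun i => by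
      have : β.1 i ∈ Set.range (ψ β) := hr β ▸ ⟨i, rfl⟩
      exact this
    choose s hs using this
    exact ⟨s, hs⟩
  choose s hs using hs
  have hσ : ∀ (β) (α : A ≃+ A), Function.Bijective (fun i => α.symm (s β i)) := by
    intro β α
    rw [Nat.bijective_iff_injective_and_card]
    refine ⟨?_, hc.symm⟩
    intro i j hij
    apply β.2.inj
    rw [← hs, ← hs, α.symm.injective hij]
  let F : {β // Good A X β} × (A ≃+ A) → {g : A ≃ X // g 0 = x0} × (X ≃ A) :=
    fun z => (⟨Equiv.ofBijective _ (hg z.1 z.2), by simp [h0]⟩,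
      Equiv.ofBijective _ (hσ z.1 z.2))
  have hF1 : ∀ β α a, (F (β, α)).1.1 a = ψ β (α a) x0 := fun _ _ _ => rfl
  have hF2 : ∀ β α i, (F (β, α)).2 i = α.symm (s β i) := fun _ _ _ => rfl
  have hF3 : ∀ β α a, trA (F (β, α)).1.1 a = ψ β (α a) := by
    intro β α a
    ext x
    obtain ⟨c, rfl⟩ := (F (β, α)).1.1.surjective x
    rw [trA_apply, hF1, hF1, map_add, hadd]; rfl
  have hF4 : ∀ β α i, trA (F (β, α)).1.1 ((F (β, α)).2 i) = β.1 i := by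
    intro β α i
    rw [hF3, hF2, α.apply_symm_apply, hs]
  rw [← Nat.card_prod, ← Nat.card_prod]
  apply Nat.card_eq_of_bijective F
  constructor
  · rintro ⟨β, α⟩ ⟨β', α'⟩ h
    have hb : β = β' := by
      apply Subtype.ext
      funext i
      rw [← hF4 β α, ← hF4 β' α', h]
    subst hb
    congr 1
    ext a
    apply hinj β
    rw [← hF3, ← hF3, h]
  · rintro ⟨⟨g, hg0⟩, σ⟩
    let β : {β // Good A X β} := ⟨_, good_tr g σ⟩
    have hx : ∀ a, ∃ b, ψ β b = trA g a := by
      intro a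
      have : trA g a ∈ Set.range (ψ β) := hr β ▸ ⟨σ.symm a, by simp [β]⟩
      exact this
    choose t ht using hx
    have tinj : Function.Injective t := by
      intro a b hab
      have h1 : trA g a (g 0) = trA g b (g 0) := by rw [← ht, ← ht, hab]
      rw [trA_apply, trA_apply] at h1
      simpa using g.injective h1
    have tb : Function.Bijective t := Finite.injective_iff_bijective.1 tinj
    let α : A ≃+ A := AddEquiv.mk' (Equiv.ofBijective t tb) (by
      intro a b
      apply hinj β
      simp only [Equiv.ofBijective_apply]
      rw [hadd, ht, ht, ht, trA_add])
    have hα : ∀ a, α a = t a := fun _ => rfl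
    refine ⟨(β, α), ?_⟩
    refine Prod.ext (Subtype.ext (Equiv.ext fun a => ?_)) (Equiv.ext fun i => ?_)
    · change _ = g a
      rw [hF1, hα, ht, ← hg0, trA_apply, add_zero]
    · rw [hF2, AddEquiv.symm_apply_eq, hα]
      apply hinj β
      rw [ht, hs]

theorem card_pointed {A X : Type*} [AddGroup A] [Finite A] [Finite X] (x0 : X)
    (hc : Nat.card A = Nat.card X) :
    Nat.card {g : A ≃ X // g 0 = x0} = (Nat.card X - 1).factorial := by
  classical
  have := Fintype.ofFinite A
  have := Fintype.ofFinite X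
  obtain ⟨k⟩ : Nonempty (X ≃ A) := Finite.card_eq.1 hc.symm
  let k' : X ≃ A := k.trans (Equiv.swap (k x0) 0)
  have hk : k' x0 = 0 := by simp [k']
  let e1 : {g : A ≃ X // g 0 = x0} ≃ {f : Equiv.Perm A // ∀ a, ¬ (a ≠ 0) → f a = a} :=
    Equiv.subtypeEquiv (Equiv.equivCongr (Equiv.refl A) k') (by
      intro g
      simp [← hk])
  rw [Nat.card_congr (e1.trans (Equiv.Perm.subtypeEquivSubtypePerm (fun a : A => a ≠ 0)).symm),
    Nat.card_perm, ← hc]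
  congr 1
  simp [Nat.card_eq_fintype_card, Fintype.card_subtype_compl]

theorem card_addaut (m : ℕ) [NeZero m] :
    Nat.card (ZMod m × ZMod m ≃+ ZMod m × ZMod m) = Nat.card (GL (Fin 2) (ZMod m)) := by
  symm
  let c : ((ZMod m × ZMod m) ≃ₗ[ZMod m] (ZMod m × ZMod m)) ≃
      (ZMod m × ZMod m ≃+ ZMod m × ZMod m) :=
    { toFun := fun f => f.toAddEquiv
      invFun := fun f => f.toLinearEquiv (fun c x => ZMod.map_smul f c x)
      left_inv := fun f => by ext <;> rfl
      right_inv := fun f => by ext <;> rfl }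
  let d := LinearEquiv.finTwoArrow (ZMod m) (ZMod m)
  let d' : ((Fin 2 → ZMod m) ≃ₗ[ZMod m] (Fin 2 → ZMod m)) ≃
      ((ZMod m × ZMod m) ≃ₗ[ZMod m] (ZMod m × ZMod m)) :=
    { toFun := fun f => (d.symm.trans f).trans d
      invFun := fun f => (d.trans f).trans d.symm
      left_inv := fun f => by ext; simp
      right_inv := fun f => by ext <;> simp }
  exact Nat.card_congr ((Matrix.GeneralLinearGroup.toLin.toEquiv.trans
    (LinearMap.GeneralLinearGroup.generalLinearEquiv _ _).toEquiv).trans (d'.trans c))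

theorem card_units_lift {R S : Type} [Ring R] [Ring S] [Finite R] [Finite S] (f : R →+* S)
    (hf : Function.Surjective f) (hu : ∀ x, IsUnit (f x) → IsUnit x) :
    Nat.card Rˣ * Nat.card S = Nat.card R * Nat.card Sˣ := by
  classical
  have e1 : ∀ (M : Type _) [Ring M], Nat.card Mˣ = Nat.card {x : M // IsUnit x} := fun M _ =>
    Nat.card_congr
    { toFun := fun u => ⟨u, u.isUnit⟩
      invFun := fun x => x.2.unit
      left_inv := fun u => by ext; rfl
      right_inv := fun x => rfl }
  have hfib : ∀ s : S, Nat.card {x : R // f x = s} = Nat.card {x : R // f x = 0} := by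
    intro s
    obtain ⟨r, hr⟩ := hf s
    exact Nat.card_congr (Equiv.subtypeEquiv (Equiv.subRight r) (by
      intro x; simp [hr, sub_eq_zero]))
  have h1 : Nat.card R = Nat.card S * Nat.card {x : R // f x = 0} := by
    have := Fintype.ofFinite S
    rw [← Nat.card_congr (Equiv.sigmaFiberEquiv f), Nat.card_sigma]
    simp [hfib]
  have h2 : Nat.card {x : R // IsUnit x} =
      Nat.card {s : S // IsUnit s} * Nat.card {x : R // f x = 0} := by
    let e : {x : R // IsUnit x} ≃ Σ s : {s : S // IsUnit s}, {x : R // f x = s} :=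
      { toFun := fun x => ⟨⟨f x, x.2.map f⟩, ⟨x, rfl⟩⟩
        invFun := fun z => ⟨z.2.1, hu _ (by rw [z.2.2]; exact z.1.2)⟩
        left_inv := fun x => rfl
        right_inv := by
          rintro ⟨⟨s, hs⟩, ⟨x, hx⟩⟩
          dsimp only at hx
          subst hx
          rfl }
    have := Fintype.ofFinite {s : S // IsUnit s}
    rw [Nat.card_congr e, Nat.card_sigma]
    simp [hfib]
  rw [e1 R, e1 S, h1, h2]
  ring

theorem card_GL2 (p e : ℕ) (hp : p.Prime) (he : 1 ≤ e) :
    Nat.card (GL (Fin 2) (ZMod (p ^ e))) =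
      Nat.totient (p ^ e) ^ 2 * (p ^ (2 * e) + p ^ (2 * e - 1)) := by
  have : Fact p.Prime := ⟨hp⟩
  have : NeZero (p ^ e) := ⟨pow_ne_zero _ hp.ne_zero⟩
  obtain ⟨k, rfl⟩ : ∃ k, e = k + 1 := ⟨e - 1, by omega⟩
  let c : ZMod (p ^ (k + 1)) →+* ZMod p := ZMod.castHom (dvd_pow_self p (by omega)) (ZMod p)
  have hcs : Function.Surjective c := ZMod.castHom_surjective _
  have hcu : ∀ x, IsUnit (c x) → IsUnit x := by
    intro x hx
    obtain ⟨a, rfl⟩ := ZMod.natCast_zmod_surjective x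
    rw [map_natCast, ZMod.isUnit_iff_coprime] at hx
    rw [ZMod.isUnit_iff_coprime]
    exact hx.pow_right _
  have h := card_units_lift (c.mapMatrix (m := Fin 2))
    (by
      intro M
      choose g hg using hcs
      exact ⟨M.map g, by ext i j; simp [hg]⟩)
    (by
      intro M hM
      rw [Matrix.isUnit_iff_isUnit_det] at hM ⊢
      rw [← RingHom.map_det] at hM
      exact hcu _ hM)
  have h1 := Matrix.card_GL_field (𝔽 := ZMod p) 2
  have hM : ∀ m : ℕ, Nat.card (Matrix (Fin 2) (Fin 2) (ZMod m)) = m ^ 4 := by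
    intro m
    simp only [Matrix, Nat.card_fun, Nat.card_zmod, Nat.card_eq_fintype_card (α := Fin 2), Fintype.card_fin]
    ring
  rw [hM, hM] at h
  change Nat.card (GL (Fin 2) _) * _ = _ * Nat.card (GL (Fin 2) _) at h
  rw [h1] at h
  simp only [Fin.prod_univ_two, ZMod.card, Fin.val_zero, Fin.val_one, pow_zero, pow_one] at h
  apply Nat.eq_of_mul_eq_mul_right (pow_pos hp.pos 4)
  rw [h, Nat.totient_prime_pow_succ hp]
  obtain ⟨r, rfl⟩ : ∃ r, p = r + 1 := ⟨p - 1, by have := hp.pos; omega⟩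
  have a1 : (r + 1) ^ 2 - 1 = r * (r + 2) := by
    rw [Nat.sub_eq_iff_eq_add (Nat.one_le_pow _ _ (by omega))]; ring
  have a2 : (r + 1) ^ 2 - (r + 1) = r * (r + 1) := by
    rw [Nat.sub_eq_iff_eq_add (by nlinarith)]; ring
  rw [a1, a2, show 2 * (k + 1) - 1 = 2 * k + 1 by omega]
  simp only [Nat.add_sub_cancel]
  ring


/-- Theorem 4.11, case `e = n/2` (`n` even): the number of permutation polynomial tuples
`(β_0,…,β_{q−1})` whose entries form a subgroup of `S_q` isomorphic to
`Z_{p^e} × Z_{p^e}` (the number of `e`-Klenian polynomials over `F_q` for `e = n/2`)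
equals `(p^n)!(p^n−1)! / (φ(p^e)² (p^{2e} + p^{2e−1}))`. -/
theorem statement17 (p n e : ℕ) (hp : p.Prime) (hn : 2 ≤ n) (he : n = 2 * e) :
    Nat.card {β : Fin (p ^ n) → Equiv.Perm (Fin (p ^ n)) //
      (∀ i j : Fin (p ^ n), i ≠ j → ∀ x : Fin (p ^ n), (β i * (β j)⁻¹) x ≠ x) ∧
      ∃ H : Subgroup (Equiv.Perm (Fin (p ^ n))),
        (H : Set (Equiv.Perm (Fin (p ^ n)))) = Set.range β ∧
        Nonempty (Additive H ≃+ ZMod (p ^ e) × ZMod (p ^ e))} =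
    Nat.factorial (p ^ n) * Nat.factorial (p ^ n - 1) /
      (Nat.totient (p ^ e) ^ 2 * (p ^ (2 * e) + p ^ (2 * e - 1))) := by

  have he1 : 1 ≤ e := by omega
  have : NeZero (p ^ e) := ⟨pow_ne_zero _ hp.ne_zero⟩
  have hpos : 0 < p ^ n := pow_pos hp.pos _
  have hc : Nat.card (ZMod (p ^ e) × ZMod (p ^ e)) = Nat.card (Fin (p ^ n)) := by
    rw [Nat.card_prod, Nat.card_zmod, Nat.card_fin, he]; ring
  have h := count_good (A := ZMod (p ^ e) × ZMod (p ^ e)) (⟨0, hpos⟩ : Fin (p ^ n)) hc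
  have h2 : Nat.card (Fin (p ^ n) ≃ ZMod (p ^ e) × ZMod (p ^ e)) = (p ^ n).factorial := by
    let k : (ZMod (p ^ e) × ZMod (p ^ e)) ≃ Fin (p ^ n) := (Finite.card_eq.1 hc).some
    rw [Nat.card_congr (Equiv.equivCongr (Equiv.refl _) k)]
    change Nat.card (Equiv.Perm _) = _
    rw [Nat.card_perm, Nat.card_fin]
  rw [card_pointed _ hc, h2, Nat.card_fin, card_addaut, card_GL2 p e hp he1] at h
  symm
  apply Nat.div_eq_of_eq_mul_left
  · have := Nat.totient_pos.2 (pow_pos hp.pos e)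
    have := pow_pos hp.pos (2 * e)
    positivity
  · rw [mul_comm, ← h]
    rfl
end
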